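/- arXiv:1708.06604 — 2 statements merged into one kernel-verified Lean document; each statement's English description precedes it below -/
import Mathlib

section
/- Let m ∈ ℕ₀ be even and let a be any real number. Then the function Q(x) = e^{a x} β^(m)(x) is convex on (0, ∞). -/
/-!
The function `β` is the moment generating function of `X t = -t` under the measure `μ` with
density `1 / (1 + e^{-t})` on `(0, ∞)`. All its exponential moments of positive order are finite,
so differentiation under the integral sign gives `β^(m)(x) = ∫ (-t)^m e^{-x t} dμ` for `x > 0`.
Hence `e^{a x} β^(m)(x) = ∫ (-t)^m e^{(a - t) x} dμ`; for `m` even the weight `(-t)^m` is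
nonnegative, and this is an average of the convex functions `x ↦ e^{(a - t) x}`.
-/

open Real MeasureTheory Set

/-- Nielsen's beta function: `β(x) = ∫₀^∞ e^{-x t} / (1 + e^{-t}) dt`. -/
noncomputable def nielsenBeta (x : ℝ) : ℝ :=
  ∫ t in Set.Ioi (0:ℝ), Real.exp (-x * t) / (1 + Real.exp (-t))

/-- The density `1 / (1 + e^{-t})`, valued in `ℝ≥0` as required by the `withDensity` API. -/
noncomputable def nielsenDensity (t : ℝ) : NNReal := Real.toNNReal (1 / (1 + Real.exp (-t)))

lemma measurable_nielsenDensity : Measurable nielsenDensity := by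
  unfold nielsenDensity; fun_prop

lemma coe_nielsenDensity (t : ℝ) : (nielsenDensity t : ℝ) = 1 / (1 + Real.exp (-t)) :=
  Real.coe_toNNReal _ (by positivity)

/-- The measure on `(0, ∞)` with density `1 / (1 + e^{-t})`. -/
noncomputable def nielsenMeasure : Measure ℝ :=
  (volume.restrict (Ioi 0)).withDensity fun t => (nielsenDensity t : ENNReal)

lemma nielsenBeta_eq_mgf :
    nielsenBeta = ProbabilityTheory.mgf (fun t : ℝ => -t) nielsenMeasure := by
  funext x
  rw [ProbabilityTheory.mgf, nielsenMeasure,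
    integral_withDensity_eq_integral_smul measurable_nielsenDensity, nielsenBeta]
  refine integral_congr_ae (Filter.Eventually.of_forall fun t => ?_)
  simp only [NNReal.smul_def, coe_nielsenDensity, smul_eq_mul]
  rw [show -x * t = x * -t by ring]
  ring

lemma mem_interior_integrableExpSet {x : ℝ} (hx : x ∈ Ioi (0 : ℝ)) :
    x ∈ interior (ProbabilityTheory.integrableExpSet (fun t : ℝ => -t) nielsenMeasure) := by
  refine interior_maximal (fun y hy => ?_) isOpen_Ioi hx
  change Integrable (fun t : ℝ => Real.exp (y * -t)) nielsenMeasure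
  rw [nielsenMeasure, integrable_withDensity_iff_integrable_smul measurable_nielsenDensity]
  refine Integrable.mono' (exp_neg_integrableOn_Ioi 0 hy) ?_ ?_
  · have := measurable_nielsenDensity
    exact Measurable.aestronglyMeasurable (by fun_prop)
  · refine Filter.Eventually.of_forall fun t => ?_
    rw [NNReal.smul_def, coe_nielsenDensity, smul_eq_mul, Real.norm_of_nonneg (by positivity),
      show y * -t = -y * t by ring]
    have h : 1 / (1 + Real.exp (-t)) ≤ 1 := by
      rw [div_le_one (by positivity)]
      linarith [Real.exp_pos (-t)]
    exact mul_le_of_le_one_left (by positivity) h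

theorem convexOn_exp_mul_iteratedDeriv_nielsenBeta (m : ℕ) (hm : Even m) (a : ℝ) :
    ConvexOn ℝ (Set.Ioi 0)
      (fun x : ℝ => Real.exp (a * x) * iteratedDeriv m nielsenBeta x) := by
  have hint : ∀ x ∈ Ioi (0 : ℝ),
      Integrable (fun t : ℝ => Real.exp (a * x) * ((-t) ^ m * Real.exp (x * -t)))
        nielsenMeasure := fun x hx =>
    (ProbabilityTheory.integrable_pow_mul_exp_of_mem_interior_integrableExpSet
      (mem_interior_integrableExpSet hx) m).const_mul _
  have hrepr : ∀ x ∈ Ioi (0 : ℝ), Real.exp (a * x) * iteratedDeriv m nielsenBeta x =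
      ∫ t, Real.exp (a * x) * ((-t) ^ m * Real.exp (x * -t)) ∂nielsenMeasure := by
    intro x hx
    rw [integral_const_mul, nielsenBeta_eq_mgf,
      ProbabilityTheory.iteratedDeriv_mgf (mem_interior_integrableExpSet hx)]
  refine ⟨convex_Ioi 0, fun x hx y hy p q hp hq hpq => ?_⟩
  have hz := (convex_Ioi (0 : ℝ)) hx hy hp hq hpq
  simp only [smul_eq_mul] at hz ⊢
  rw [hrepr x hx, hrepr y hy, hrepr _ hz]
  rw [← integral_const_mul p, ← integral_const_mul q,
    ← integral_add ((hint x hx).const_mul p) ((hint y hy).const_mul q)]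
  refine integral_mono (hint _ hz) (((hint x hx).const_mul p).add ((hint y hy).const_mul q))
    fun t => ?_
  have hexp := convexOn_exp.2 (mem_univ ((a - t) * x)) (mem_univ ((a - t) * y)) hp hq hpq
  simp only [smul_eq_mul] at hexp
  have hcomb : ∀ u : ℝ, Real.exp (a * u) * ((-t) ^ m * Real.exp (u * -t)) =
      (-t) ^ m * Real.exp ((a - t) * u) := by
    intro u
    rw [mul_left_comm, ← Real.exp_add]
    ring_nf
  simp only [hcomb]
  calc (-t) ^ m * Real.exp ((a - t) * (p * x + q * y))
      = (-t) ^ m * Real.exp (p * ((a - t) * x) + q * ((a - t) * y)) := by ring_nf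
    _ ≤ (-t) ^ m * (p * Real.exp ((a - t) * x) + q * Real.exp ((a - t) * y)) :=
        mul_le_mul_of_nonneg_left hexp (hm.pow_nonneg _)
    _ = _ := by ring
end

section
/- Let m ∈ ℕ₀ and let x, y > 0. If m is even then β^(m)(x + y) ≤ β^(m)(x) + β^(m)(y) (i.e. β^(m) is subadditive on (0,∞)), and if m is odd then β^(m)(x + y) ≥ β^(m)(x) + β^(m)(y) (i.e. β^(m) is superadditive on (0,∞)). -/
/-!
Differentiating under the integral sign gives, for `x > 0`,
`β^(m)(x) = ∫₀^∞ (-t)^m e^{-xt} / (1 + e^{-t}) dt` (`iteratedDeriv_nielsenBeta`).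
For `t > 0` one has `e^{-(x+y)t} ≤ e^{-xt} ≤ e^{-xt} + e^{-yt}`. Multiplying by
`(-t)^m / (1 + e^{-t})`, which is nonnegative for even `m` and nonpositive for odd `m`, and
integrating gives subadditivity and superadditivity respectively.
-/

open Real MeasureTheory Set

lemma integrableOn_pow_mul_exp_neg (n : ℕ) {x : ℝ} (hx : 0 < x) :
    IntegrableOn (fun t : ℝ => t ^ n * Real.exp (-x * t)) (Ioi 0) := by
  have h := integrableOn_rpow_mul_exp_neg_mul_rpow (p := 1) (s := n) (b := x)
    (by linarith [Nat.cast_nonneg (α := ℝ) n]) one_pos hx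
  simpa using h

lemma aestronglyMeasurable_betaIntegrand (n : ℕ) (x : ℝ) :
    AEStronglyMeasurable
      (fun t : ℝ => (-t) ^ n * (Real.exp (-x * t) / (1 + Real.exp (-t))))
      (volume.restrict (Ioi 0)) := by
  have h : Measurable
      (fun t : ℝ => (-t) ^ n * (Real.exp (-x * t) / (1 + Real.exp (-t)))) := by fun_prop
  exact h.aestronglyMeasurable

/-- Domination by the Gamma-type integrand at any smaller exponent `c`; used with `c = x` for
integrability and with `c = x / 2` for differentiation under the integral sign. -/
lemma norm_betaIntegrand_le (n : ℕ) {c x t : ℝ} (hcx : c ≤ x) (ht : 0 < t) :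
    ‖(-t) ^ n * (Real.exp (-x * t) / (1 + Real.exp (-t)))‖ ≤ t ^ n * Real.exp (-c * t) := by
  rw [norm_mul, norm_pow, norm_neg, Real.norm_of_nonneg ht.le,
    Real.norm_of_nonneg (by positivity)]
  gcongr
  calc Real.exp (-x * t) / (1 + Real.exp (-t)) ≤ Real.exp (-x * t) :=
        div_le_self (Real.exp_pos _).le (by linarith [Real.exp_pos (-t)])
    _ ≤ Real.exp (-c * t) := by gcongr

lemma integrableOn_betaIntegrand (n : ℕ) {x : ℝ} (hx : 0 < x) :
    IntegrableOn
      (fun t : ℝ => (-t) ^ n * (Real.exp (-x * t) / (1 + Real.exp (-t)))) (Ioi 0) := by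
  refine Integrable.mono' (integrableOn_pow_mul_exp_neg n hx)
    (aestronglyMeasurable_betaIntegrand n x) ?_
  filter_upwards [ae_restrict_mem measurableSet_Ioi] with t ht
  exact norm_betaIntegrand_le n le_rfl ht

lemma hasDerivAt_betaIntegral (n : ℕ) {x : ℝ} (hx : 0 < x) :
    HasDerivAt
      (fun z : ℝ => ∫ t in Ioi (0:ℝ), (-t) ^ n * (Real.exp (-z * t) / (1 + Real.exp (-t))))
      (∫ t in Ioi (0:ℝ), (-t) ^ (n + 1) * (Real.exp (-x * t) / (1 + Real.exp (-t)))) x := by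
  refine (hasDerivAt_integral_of_dominated_loc_of_deriv_le
    (s := Ioi (x / 2)) (bound := fun t => t ^ (n + 1) * Real.exp (-(x / 2) * t))
    (F' := fun z t => (-t) ^ (n + 1) * (Real.exp (-z * t) / (1 + Real.exp (-t))))
    (Ioi_mem_nhds (by linarith))
    (Filter.Eventually.of_forall (aestronglyMeasurable_betaIntegrand n))
    (integrableOn_betaIntegrand n hx) (aestronglyMeasurable_betaIntegrand (n + 1) x) ?_
    (integrableOn_pow_mul_exp_neg (n + 1) (half_pos hx)) ?_).2
  · filter_upwards [ae_restrict_mem measurableSet_Ioi] with t ht z hz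
    exact norm_betaIntegrand_le (n + 1) (le_of_lt hz) ht
  · refine Filter.Eventually.of_forall fun t z _ => ?_
    refine (((((hasDerivAt_neg z).mul_const t).exp).div_const
      (1 + Real.exp (-t))).const_mul ((-t) ^ n)).congr_deriv ?_
    ring

lemma iteratedDeriv_nielsenBeta (m : ℕ) {x : ℝ} (hx : 0 < x) :
    iteratedDeriv m nielsenBeta x =
      ∫ t in Ioi (0:ℝ), (-t) ^ m * (Real.exp (-x * t) / (1 + Real.exp (-t))) := by
  induction m generalizing x with
  | zero => simp [nielsenBeta]
  | succ n ih =>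
    rw [iteratedDeriv_succ]
    refine ((hasDerivAt_betaIntegral n hx).congr_of_eventuallyEq ?_).deriv
    filter_upwards [Ioi_mem_nhds hx] with z hz
    exact ih hz

theorem iteratedDeriv_nielsenBeta_sub_super_additive (m : ℕ) (x y : ℝ)
    (hx : 0 < x) (hy : 0 < y) :
    (Even m →
      iteratedDeriv m nielsenBeta (x + y) ≤
        iteratedDeriv m nielsenBeta x + iteratedDeriv m nielsenBeta y) ∧
    (Odd m →
      iteratedDeriv m nielsenBeta x + iteratedDeriv m nielsenBeta y ≤
        iteratedDeriv m nielsenBeta (x + y)) := by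
  have hxy : 0 < x + y := add_pos hx hy
  have ix := integrableOn_betaIntegrand m hx
  have iy := integrableOn_betaIntegrand m hy
  have ixy := integrableOn_betaIntegrand m hxy
  have key : ∀ t : ℝ, 0 < t → Real.exp (-(x + y) * t) / (1 + Real.exp (-t)) ≤
      Real.exp (-x * t) / (1 + Real.exp (-t)) + Real.exp (-y * t) / (1 + Real.exp (-t)) := by
    intro t ht
    have h1 : Real.exp (-(x + y) * t) ≤ Real.exp (-x * t) :=
      Real.exp_le_exp.2 (by nlinarith)
    rw [← add_div]
    gcongr
    linarith [Real.exp_pos (-y * t)]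
  rw [iteratedDeriv_nielsenBeta m hx, iteratedDeriv_nielsenBeta m hy,
    iteratedDeriv_nielsenBeta m hxy, ← integral_add ix iy]
  constructor
  · intro hm
    refine setIntegral_mono_on ixy (ix.add iy) measurableSet_Ioi fun t ht => ?_
    rw [← mul_add]
    exact mul_le_mul_of_nonneg_left (key t ht) (hm.pow_nonneg _)
  · intro hm
    refine setIntegral_mono_on (ix.add iy) ixy measurableSet_Ioi fun t ht => ?_
    rw [← mul_add]
    exact mul_le_mul_of_nonpos_left (key t ht)
      (hm.pow_nonpos (neg_nonpos.2 (le_of_lt ht)))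
end
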